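/- Let V, W be finite-dimensional complex vector spaces with dim V = c, and for each p = [p₁:p₂] ∈ ℙ¹ let B̃₁(p) = p₁B₁₁ + p₂B₂₁, B̃₂(p) = p₁B₁₂ + p₂B₂₂, ĩ(p) = p₁i₁ + p₂i₂ be the evaluated complex ADHM datum. If there exists some p ∈ ℙ¹ such that (B̃₁(p), B̃₂(p), ĩ(p)) is stable, then the set of points q ∈ ℙ¹ at which (B̃₁(q), B̃₂(q), ĩ(q)) is not stable is finite. -/

import Mathlib

variable {V W : Type*} [AddCommGroup V] [Module ℂ V] [AddCommGroup W] [Module ℂ W]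
  [FiniteDimensional ℂ V] [FiniteDimensional ℂ W]

def ADHMStable (B₁ B₂ : V →ₗ[ℂ] V) (i : W →ₗ[ℂ] V) : Prop :=
  ∀ S : Submodule ℂ V, S ≠ ⊤ → (∀ v ∈ S, B₁ v ∈ S) → (∀ v ∈ S, B₂ v ∈ S) →
    ¬ LinearMap.range i ≤ S

/-!
A datum is stable exactly when the vectors obtained by applying words in the operators to the
image of the framing span the space. Along an affine line of data these vectors are polynomial in
the parameter, so if finitely many of them form a basis at one parameter, then their determinant
is a nonzero polynomial in one variable, and stability can fail only at its roots. The projective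
line through a stable point is such an affine line together with one further point.
-/

open Module Polynomial Projectivization
open scoped LinearAlgebra.Projectivization

section Stability

variable {R ι M N : Type*}

section Semiring

variable [Semiring R] [AddCommMonoid M] [Module R M]

/-- Stability of a framed family of operators, the framing being `i`. The ADHM case has two
operators, indexed by `Fin 2`. -/
def IsStableDatum [AddCommMonoid N] [Module R N] (A : ι → End R M) (i : N →ₗ[R] M) : Prop :=
  ∀ S : Submodule R M, (∀ a, S ∈ (A a).invtSubmodule) → LinearMap.range i ≤ S → S = ⊤

/-- The vector obtained by applying the word `x.1` in the operators `A` to the generator `u x.2`.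
Words are elements of the free monoid, so that their action is `FreeMonoid.lift A`. -/
def wordVector (A : ι → End R M) (u : N → M) (x : FreeMonoid ι × N) : M :=
  FreeMonoid.lift A x.1 (u x.2)

lemma wordVector_one (A : ι → End R M) (u : N → M) (w : N) : wordVector A u (1, w) = u w := by
  simp [wordVector]

lemma wordVector_of_mul (A : ι → End R M) (u : N → M) (a : ι) (x : FreeMonoid ι) (w : N) :
    wordVector A u (.of a * x, w) = A a (wordVector A u (x, w)) := by
  simp [wordVector]

lemma map_wordVector {M' : Type*} [AddCommMonoid M'] [Module R M'] (f : M →ₗ[R] M')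
    {A : ι → End R M} {A' : ι → End R M'} (hA : ∀ a m, f (A a m) = A' a (f m))
    (u : N → M) (x : FreeMonoid ι × N) :
    f (wordVector A u x) = wordVector A' (f ∘ u) x := by
  obtain ⟨x, w⟩ := x
  induction x using FreeMonoid.inductionOn' with
  | one => simp only [wordVector_one, Function.comp_apply]
  | of_mul a x ih => rw [wordVector_of_mul, wordVector_of_mul, hA, ih]

lemma span_wordVector_mem_invtSubmodule (A : ι → End R M) (u : N → M) (a : ι) :
    Submodule.span R (Set.range (wordVector A u)) ∈ (A a).invtSubmodule := by
  rw [End.mem_invtSubmodule, Submodule.span_le]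
  rintro _ ⟨⟨x, w⟩, rfl⟩
  exact Submodule.subset_span ⟨(.of a * x, w), wordVector_of_mul A u a x w⟩

lemma wordVector_mem {A : ι → End R M} {u : N → M} {S : Submodule R M}
    (hA : ∀ a, S ∈ (A a).invtSubmodule) (hu : ∀ w, u w ∈ S) (x : FreeMonoid ι × N) :
    wordVector A u x ∈ S := by
  obtain ⟨x, w⟩ := x
  induction x using FreeMonoid.inductionOn' with
  | one => exact wordVector_one A u w ▸ hu w
  | of_mul a x ih => exact wordVector_of_mul A u a x w ▸ hA a ih

variable [AddCommMonoid N] [Module R N]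

theorem isStableDatum_iff_span_wordVector_eq_top {A : ι → End R M} {i : N →ₗ[R] M} :
    IsStableDatum A i ↔ Submodule.span R (Set.range (wordVector A i)) = ⊤ := by
  constructor
  · intro h
    refine h _ (span_wordVector_mem_invtSubmodule A i) ?_
    rintro _ ⟨w, rfl⟩
    exact Submodule.subset_span ⟨(1, w), wordVector_one A i w⟩
  · intro h S hA hi
    rw [eq_top_iff, ← h, Submodule.span_le]
    rintro _ ⟨x, rfl⟩
    exact wordVector_mem hA (fun w => hi ⟨w, rfl⟩) x

end Semiring

lemma IsStableDatum.units_smul [CommSemiring R] [AddCommMonoid M] [Module R M]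
    [AddCommMonoid N] [Module R N] {A : ι → End R M} {i : N →ₗ[R] M}
    (h : IsStableDatum A i) (c : Rˣ) : IsStableDatum (c • A) (c • i) := by
  intro S hA hi
  refine h S (fun a m hm => (S.smul_mem_iff' c).1 (hA a hm)) ?_
  rintro _ ⟨w, rfl⟩
  exact (S.smul_mem_iff' c).1 (hi ⟨w, rfl⟩)

end Stability

lemma adhmStable_iff_isStableDatum {E F : Type*} [AddCommGroup E] [Module ℂ E] [AddCommGroup F]
    [Module ℂ F] {B₁ B₂ : E →ₗ[ℂ] E} {i : F →ₗ[ℂ] E} :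
    ADHMStable B₁ B₂ i ↔ IsStableDatum ![B₁, B₂] i := by
  refine forall_congr' fun S => ?_
  simp only [Fin.forall_fin_two, End.mem_invtSubmodule_iff_forall_mem_of_mem,
    Matrix.cons_val_zero, Matrix.cons_val_one]
  tauto

section PolynomialFamilies

lemma eval_equivPolynomial_map {R M : Type*} [CommRing R] [AddCommGroup M] [Module R M]
    (f : M →ₗ[R] R) (P : PolynomialModule R M) (t : R) :
    (PolynomialModule.equivPolynomial (PolynomialModule.map R f P)).eval t =
      f (PolynomialModule.eval t P) := by
  rw [← coe_aeval_eq_eval, PolynomialModule.aeval_equivPolynomial, PolynomialModule.eval_map',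
    Algebra.linearMap_apply, Algebra.algebraMap_self_apply]
  exact PolynomialModule.eval_map R f P t

lemma exists_polynomial_eval_eq_det {R M κ : Type*} [CommRing R] [AddCommGroup M] [Module R M]
    [Fintype κ] [DecidableEq κ] (b : Basis κ R M) (P : κ → PolynomialModule R M) :
    ∃ D : R[X], ∀ t, D.eval t = b.det fun k => PolynomialModule.eval t (P k) := by
  refine ⟨Matrix.det (.of fun j k =>
    PolynomialModule.equivPolynomial (PolynomialModule.map R (b.coord j) (P k))), fun t => ?_⟩
  rw [← coe_evalRingHom, RingHom.map_det, b.det_apply]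
  congr 1
  ext j k
  simp [eval_equivPolynomial_map, Basis.toMatrix_apply]

variable {K ι κ E F : Type*} [Field K] [AddCommGroup E] [Module K E] [FiniteDimensional K E]

theorem finite_setOf_span_eval_ne_top (P : κ → PolynomialModule K E) {t₀ : K}
    (h : Submodule.span K (Set.range fun k => PolynomialModule.eval t₀ (P k)) = ⊤) :
    {t | Submodule.span K (Set.range fun k => PolynomialModule.eval t (P k)) ≠ ⊤}.Finite := by
  classical
  let b := Basis.ofSpan h.ge
  have := FiniteDimensional.fintypeBasisIndex b
  choose x hx using fun j => Basis.ofSpan_subset h.ge (Set.mem_range_self j)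
  obtain ⟨D, hD⟩ := exists_polynomial_eval_eq_det b (P ∘ x)
  have hD₀ : D.eval t₀ = 1 := by
    rw [hD, ← b.det_self]
    exact congrArg b.det (funext hx)
  have hD_ne : D ≠ 0 := by
    rintro rfl
    simp at hD₀
  refine (finite_setOfPred_isRoot hD_ne).subset fun t ht => ?_
  by_contra hroot
  have hdet : IsUnit (b.det fun j => PolynomialModule.eval t (P (x j))) :=
    isUnit_iff_ne_zero.2 fun h₀ => hroot ((hD t).trans h₀)
  have hbasis := b.is_basis_iff_det.2 hdet
  refine ht (eq_top_iff.2 (hbasis.2.ge.trans (Submodule.span_mono ?_)))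
  rintro _ ⟨j, rfl⟩
  exact ⟨x j, rfl⟩

variable [AddCommGroup F] [Module K F]

theorem finite_setOf_not_isStableDatum_of_eval {A : K → ι → End K E} {i : K → F →ₗ[K] E}
    (P : ι → End K (PolynomialModule K E)) (Q : F → PolynomialModule K E)
    (hP : ∀ t a m, PolynomialModule.eval t (P a m) = A t a (PolynomialModule.eval t m))
    (hQ : ∀ t w, PolynomialModule.eval t (Q w) = i t w)
    {t₀ : K} (h : IsStableDatum (A t₀) (i t₀)) :
    {t | ¬ IsStableDatum (A t) (i t)}.Finite := by
  have hword (t : K) : (fun x => PolynomialModule.eval t (wordVector P Q x)) =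
      wordVector (A t) (i t) := by
    funext x
    rw [map_wordVector _ (hP t), show PolynomialModule.eval t ∘ Q = i t from funext (hQ t)]
  simp only [isStableDatum_iff_span_wordVector_eq_top, ← hword] at h ⊢
  exact finite_setOf_span_eval_ne_top (wordVector P Q) h

theorem IsStableDatum.finite_setOf_not_add_smul {A : ι → End K E} {i : F →ₗ[K] E}
    (h : IsStableDatum A i) (A' : ι → End K E) (i' : F →ₗ[K] E) :
    {t : K | ¬ IsStableDatum (A + t • A') (i + t • i')}.Finite := by
  refine finite_setOf_not_isStableDatum_of_eval (t₀ := 0)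
    (fun a => PolynomialModule.map K (A a) + (X : K[X]) • PolynomialModule.map K (A' a))
    (fun w => PolynomialModule.single K 0 (i w) + PolynomialModule.single K 1 (i' w)) ?_ ?_ ?_
  · intro t a m
    simp
  · intro t w
    simp
  · simpa using h

end PolynomialFamilies

section ProjectiveLine

variable {K U : Type*} [Field K] [AddCommGroup U] [Module K U]

theorem exists_forall_eq_mk_or_eq_mk_add_smul (hU : finrank K U = 2) {p : U} (hp : p ≠ 0) :
    ∃ (p' : U) (hp' : p' ≠ 0) (hline : ∀ t : K, p + t • p' ≠ 0), ∀ q : ℙ K U,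
      q = mk K p' hp' ∨ ∃ t, q = mk K (p + t • p') (hline t) := by
  obtain ⟨p', hind⟩ := exists_linearIndependent_pair_of_one_lt_finrank (R := K) (by lia) hp
  have hp' : p' ≠ 0 := hind.ne_zero 1
  have hline (t : K) : p + t • p' ≠ 0 := fun h =>
    one_ne_zero (LinearIndependent.pair_iff.1 hind 1 t (by rwa [one_smul])).1
  refine ⟨p', hp', hline, fun q => ?_⟩
  have : FiniteDimensional K U := .of_finrank_pos (by lia)
  have hspan := hind.span_eq_top_of_card_eq_finrank' (by simp [hU])
  obtain ⟨α, β, hq⟩ : ∃ α β : K, α • p + β • p' = q.rep := by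
    rw [← Submodule.mem_span_pair, ← Matrix.range_cons_cons_empty p p' ![], hspan]
    trivial
  rw [← q.mk_rep]
  simp only [mk_eq_mk_iff']
  rcases eq_or_ne α 0 with rfl | hα
  · exact .inl ⟨β, by simpa using hq⟩
  · refine .inr ⟨α⁻¹ * β, α, ?_⟩
    rw [← hq, smul_add, smul_smul, mul_inv_cancel_left₀ hα]

end ProjectiveLine

theorem semistable_finitely_many_unstable_points_general {K ι U E F : Type*} [Field K]
    [AddCommGroup U] [Module K U] [AddCommGroup E] [Module K E] [FiniteDimensional K E]
    [AddCommGroup F] [Module K F] (hU : finrank K U = 2)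
    (A : U →ₗ[K] ι → End K E) (i : U →ₗ[K] F →ₗ[K] E)
    (h : ∃ p : U, p ≠ 0 ∧ IsStableDatum (A p) (i p)) :
    {q : ℙ K U | ¬ IsStableDatum (A q.rep) (i q.rep)}.Finite := by
  obtain ⟨p, hp, hstable⟩ := h
  obtain ⟨p', hp', hline, hcover⟩ := exists_forall_eq_mk_or_eq_mk_add_smul hU hp
  refine (((hstable.finite_setOf_not_add_smul (A p') (i p')).image
    fun t => mk K _ (hline t)).insert (mk K p' hp')).subset fun q hq => ?_
  refine (hcover q).imp_right ?_
  rintro ⟨t, rfl⟩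
  refine ⟨t, fun ht => hq ?_, rfl⟩
  obtain ⟨c, hc⟩ := exists_smul_eq_mk_rep K (p + t • p') (hline t)
  simpa [← hc] using ht.units_smul c

/-- If the evaluated datum is stable at one point of `ℙ¹`, it is stable away
from finitely many points of `ℙ¹`. -/
theorem semistable_finitely_many_unstable_points
    (B₁₁ B₁₂ B₂₁ B₂₂ : V →ₗ[ℂ] V) (i₁ i₂ : W →ₗ[ℂ] V) (j₁ j₂ : V →ₗ[ℂ] W)
    (h : ∃ p : ℂ × ℂ, p ≠ 0 ∧
      ADHMStable (p.1 • B₁₁ + p.2 • B₂₁) (p.1 • B₁₂ + p.2 • B₂₂)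
        (p.1 • i₁ + p.2 • i₂)) :
    {q : Projectivization ℂ (ℂ × ℂ) |
      ¬ ADHMStable (q.rep.1 • B₁₁ + q.rep.2 • B₂₁)
          (q.rep.1 • B₁₂ + q.rep.2 • B₂₂)
          (q.rep.1 • i₁ + q.rep.2 • i₂)}.Finite := by
  simpa [adhmStable_iff_isStableDatum] using semistable_finitely_many_unstable_points_general
    (by simp)
    (.coprod (.toSpanSingleton ℂ _ ![B₁₁, B₁₂]) (.toSpanSingleton ℂ _ ![B₂₁, B₂₂]))
    (.coprod (.toSpanSingleton ℂ _ i₁) (.toSpanSingleton ℂ _ i₂)) (by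
      simpa [adhmStable_iff_isStableDatum] using h)
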